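/- arXiv:cs/0106008 — 6 statements merged into one kernel-verified Lean document; each statement's English description precedes it below -/
import Mathlib

section
/- Let L be a finite complete lattice and τ : ι → L → L a family of operators (ι a finite nonempty type) such that every τ i is monotone and deflationary. Let t : ℕ → ι be a fair index sequence. Then the trace from b along t is eventually constant, and its eventual value equals the greatest common fixpoint of the family below b. -/
/-- In a finite complete lattice, a fair trace along monotone deflationary
operators is eventually constant, and its eventual value is the greatest
common fixpoint of the family below the starting element. -/
theorem stmt_2 {L ι : Type*} [CompleteLattice L] [Fintype L] [Fintype ι] [Nonempty ι]
    (τ : ι → L → L) (hmono : ∀ i, Monotone (τ i)) (hdef : ∀ i x, τ i x ≤ x)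
    (b : L) (t : ℕ → ι) (hfair : ∀ i : ι, ∀ N : ℕ, ∃ k ≥ N, t k = i)
    (x : ℕ → L) (hx0 : x 0 = b) (hxs : ∀ k, x (k + 1) = τ (t k) (x k)) :
    ∃ N, (∀ k ≥ N, x k = x N) ∧
      IsGreatest {y | y ≤ b ∧ ∀ i, τ i y = y} (x N) := by
  have hanti : Antitone x := antitone_nat_of_succ_le (fun k => by
    rw [hxs]; exact hdef _ _)
  have hwf : WellFounded ((· < ·) : L → L → Prop) := wellFounded_lt
  obtain ⟨m, ⟨N, rfl⟩, hmin⟩ := hwf.has_min (Set.range x) ⟨x 0, 0, rfl⟩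
  have hconst : ∀ k ≥ N, x k = x N := fun k hk =>
    (hanti hk).eq_of_not_lt (hmin _ ⟨k, rfl⟩)
  refine ⟨N, hconst, ⟨?_, ?_⟩, ?_⟩
  · rw [← hx0]
    exact hanti (Nat.zero_le N)
  · intro i
    obtain ⟨k, hk, rfl⟩ := hfair i N
    have h := hxs k
    rw [hconst k hk, hconst (k + 1) (Nat.le_succ_of_le hk)] at h
    exact h.symm
  · rintro y ⟨hyb, hy⟩
    have hall : ∀ k, y ≤ x k := by
      intro k
      induction k with
      | zero => rw [hx0]; exact hyb
      | succ k ih =>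
        rw [hxs, ← hy (t k)]
        exact hmono _ ih
    exact hall N
end

section
/- Let L be a finite complete lattice and τ : ι → L → L a family of operators (ι a finite nonempty type) such that every τ i is monotone and deflationary. If t and t' are two fair index sequences, then the traces from the same starting element b along t and along t' are both eventually constant and have the same eventual value. -/
theorem trace_aux {L ι : Type*} [CompleteLattice L] [Fintype L]
    (τ : ι → L → L) (hdef : ∀ i x, τ i x ≤ x) (b : L) (t : ℕ → ι)
    (hfair : ∀ i : ι, ∀ N : ℕ, ∃ k ≥ N, t k = i)
    (x : ℕ → L) (hx0 : x 0 = b) (hxs : ∀ k, x (k + 1) = τ (t k) (x k)) :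
    ∃ N, (∀ k ≥ N, x k = x N) ∧ x N ≤ b ∧ ∀ i, τ i (x N) = x N := by
  have hanti : Antitone x := antitone_nat_of_succ_le fun k => by
    rw [hxs]; exact hdef _ _
  obtain ⟨m, ⟨N, rfl⟩, hm⟩ := (wellFounded_lt (α := L)).has_min (Set.range x) ⟨x 0, 0, rfl⟩
  have hc : ∀ k ≥ N, x k = x N := fun k hk => by
    by_contra h
    exact hm (x k) ⟨k, rfl⟩ (lt_of_le_of_ne (hanti hk) h)
  refine ⟨N, hc, hx0 ▸ hanti (Nat.zero_le N), fun i => ?_⟩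
  obtain ⟨k, hk, rfl⟩ := hfair i N
  have h := hxs k
  rw [hc k hk, hc (k + 1) (by omega)] at h
  exact h.symm

theorem trace_lower {L ι : Type*} [CompleteLattice L]
    (τ : ι → L → L) (hmono : ∀ i, Monotone (τ i)) (b : L) (t : ℕ → ι)
    (x : ℕ → L) (hx0 : x 0 = b) (hxs : ∀ k, x (k + 1) = τ (t k) (x k))
    (y : L) (hy : y ≤ b) (hfix : ∀ i, τ i y = y) (k : ℕ) : y ≤ x k := by
  induction k with
  | zero => rw [hx0]; exact hy
  | succ k ih =>
    rw [hxs, ← hfix (t k)]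
    exact hmono _ ih

/-- In a finite complete lattice, any two fair traces from the same starting
element along monotone deflationary operators are eventually constant with
the same eventual value. -/
theorem stmt_3 {L ι : Type*} [CompleteLattice L] [Fintype L] [Fintype ι] [Nonempty ι]
    (τ : ι → L → L) (hmono : ∀ i, Monotone (τ i)) (hdef : ∀ i x, τ i x ≤ x)
    (b : L) (t t' : ℕ → ι)
    (hfair : ∀ i : ι, ∀ N : ℕ, ∃ k ≥ N, t k = i)
    (hfair' : ∀ i : ι, ∀ N : ℕ, ∃ k ≥ N, t' k = i)
    (x x' : ℕ → L)
    (hx0 : x 0 = b) (hxs : ∀ k, x (k + 1) = τ (t k) (x k))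
    (hx0' : x' 0 = b) (hxs' : ∀ k, x' (k + 1) = τ (t' k) (x' k)) :
    ∃ N N', (∀ k ≥ N, x k = x N) ∧ (∀ k ≥ N', x' k = x' N') ∧ x N = x' N' := by
  obtain ⟨N, hN, hb, hf⟩ := trace_aux τ hdef b t hfair x hx0 hxs
  obtain ⟨N', hN', hb', hf'⟩ := trace_aux τ hdef b t' hfair' x' hx0' hxs'
  exact ⟨N, N', hN, hN', le_antisymm
    (trace_lower τ hmono b t' x' hx0' hxs' _ hb hf N')
    (trace_lower τ hmono b t x hx0 hxs _ hb' hf' N)⟩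
end

section
/- Let L be a finite complete lattice and τ : ι → L → L a family of operators (ι a finite nonempty type) such that every τ i is monotone and deflationary. Then for every index sequence t, the eventual value of any fair trace from b is less than or equal to the eventual value of the trace from b along t. Consequently, the greatest lower bound of the eventual values of the traces from b over all index sequences is itself the eventual value of a trace from b (namely of any fair trace). -/
/-- In a finite complete lattice, the eventual value of any fair trace is below
the eventual value of any trace from the same starting element, and hence the
greatest lower bound of the eventual values of all traces is the eventual
value of the fair trace. -/
theorem stmt_4 {L ι : Type*} [CompleteLattice L] [Fintype L] [Fintype ι] [Nonempty ι]
    (τ : ι → L → L) (hmono : ∀ i, Monotone (τ i)) (hdef : ∀ i x, τ i x ≤ x)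
    (b : L)
    (tf : ℕ → ι) (hfair : ∀ i : ι, ∀ N : ℕ, ∃ k ≥ N, tf k = i)
    (xf : ℕ → L) (hxf0 : xf 0 = b) (hxfs : ∀ k, xf (k + 1) = τ (tf k) (xf k))
    (lf : L) (hlf : ∃ N, ∀ k ≥ N, xf k = lf) :
    (∀ (t : ℕ → ι) (x : ℕ → L) (l : L),
        x 0 = b → (∀ k, x (k + 1) = τ (t k) (x k)) →
        (∃ N, ∀ k ≥ N, x k = l) → lf ≤ l) ∧
    lf = sInf {l | ∃ (t : ℕ → ι) (x : ℕ → L),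
        x 0 = b ∧ (∀ k, x (k + 1) = τ (t k) (x k)) ∧ ∃ N, ∀ k ≥ N, x k = l} := by
  obtain ⟨N, hN⟩ := hlf
  have hfix : ∀ i, τ i lf = lf := by
    intro i
    obtain ⟨k, hk, rfl⟩ := hfair i N
    have h := hxfs k
    rw [hN k hk, hN (k + 1) (by omega)] at h
    exact h.symm
  have hle : ∀ k, xf k ≤ b := by
    intro k
    induction k with
    | zero => exact hxf0.le
    | succ k ih => rw [hxfs]; exact (hdef _ _).trans ih
  have hlb : lf ≤ b := hN N le_rfl ▸ hle N
  have main : ∀ (t : ℕ → ι) (x : ℕ → L) (l : L),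
      x 0 = b → (∀ k, x (k + 1) = τ (t k) (x k)) →
      (∃ N, ∀ k ≥ N, x k = l) → lf ≤ l := by
    rintro t x l h0 hs ⟨M, hM⟩
    have hx : ∀ k, lf ≤ x k := by
      intro k
      induction k with
      | zero => rw [h0]; exact hlb
      | succ k ih => rw [hs, ← hfix (t k)]; exact hmono _ ih
    exact hM M le_rfl ▸ hx M
  refine ⟨main, le_antisymm ?_ ?_⟩
  · apply le_sInf
    rintro l ⟨t, x, h0, hs, hl⟩
    exact main t x l h0 hs hl
  · exact sInf_le ⟨tf, xf, hxf0, hxfs, N, hN⟩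
end

section
/- Let an interval constraint system on ℝⁿ be given, let B be a box, let i be a coordinate, and let a be a real number. If the system is failed below B ∩ {x | x i ≤ a} and also failed below B ∩ {x | a ≤ x i}, then the system has no solution lying in B. -/
/-- A box in `ℝⁿ`: a product of convex subsets of `ℝ`. -/
def IsBox {n : ℕ} (B : Set (Fin n → ℝ)) : Prop :=
  ∃ I : Fin n → Set ℝ, (∀ j, Convex ℝ (I j)) ∧ B = Set.pi Set.univ I

/-- The contraction operator of a relation `r ⊆ ℝⁿ`. -/
def contractOp {n : ℕ} (r : Set (Fin n → ℝ)) (B : Set (Fin n → ℝ)) :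
    Set (Fin n → ℝ) :=
  Set.pi Set.univ fun j => convexHull ℝ ((fun x => x j) '' (r ∩ B))

/-- Failure of an interval constraint system below a box. -/
def Failed {n m : ℕ} (r : Fin m → Set (Fin n → ℝ)) (B : Set (Fin n → ℝ)) : Prop :=
  ∀ C : Set (Fin n → ℝ), IsBox C → C ⊆ B →
    (∀ i, contractOp (r i) C = C) → C = ∅

/-- If probing with `x i ≤ a` and with `a ≤ x i` both yield failure, then
the system has no solution in `B`. -/
theorem stmt_8 {n m : ℕ} (r : Fin m → Set (Fin n → ℝ))
    (B : Set (Fin n → ℝ)) (hB : IsBox B) (i : Fin n) (a : ℝ)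
    (h₁ : Failed r (B ∩ {x | x i ≤ a}))
    (h₂ : Failed r (B ∩ {x | a ≤ x i})) :
    ¬ ∃ s : Fin n → ℝ, (∀ k, s ∈ r k) ∧ s ∈ B := by
  rintro ⟨s, hs, hsB⟩
  have hbox : IsBox ({s} : Set (Fin n → ℝ)) :=
    ⟨fun j => {s j}, fun j => convex_singleton _, (Set.univ_pi_singleton s).symm⟩
  have hfix : ∀ k, contractOp (r k) {s} = {s} := by
    intro k
    have h : r k ∩ {s} = {s} := Set.inter_eq_right.mpr (Set.singleton_subset_iff.mpr (hs k))
    unfold contractOp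
    simp only [h, Set.image_singleton, convexHull_singleton, Set.univ_pi_singleton]
  rcases le_total (s i) a with h | h
  · exact Set.singleton_ne_empty s
      (h₁ _ hbox (Set.singleton_subset_iff.mpr ⟨hsB, h⟩) hfix)
  · exact Set.singleton_ne_empty s
      (h₂ _ hbox (Set.singleton_subset_iff.mpr ⟨hsB, h⟩) hfix)
end

section
/- Let an interval constraint system on ℝⁿ be given and let B₀ be a box. If the system is failed below B₀, then the system has no solution lying in B₀. -/
/-- A failed constraint system has no solution in the box. -/
theorem stmt_15 {n m : ℕ} (r : Fin m → Set (Fin n → ℝ))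
    (B₀ : Set (Fin n → ℝ)) (hB₀ : IsBox B₀) (hfail : Failed r B₀) :
    ¬ ∃ s : Fin n → ℝ, (∀ i, s ∈ r i) ∧ s ∈ B₀ := by
  rintro ⟨s, hs, hsB⟩
  have h : ({s} : Set (Fin n → ℝ)) = ∅ := by
    refine hfail {s} ⟨fun j => {s j}, fun j => convex_singleton _, ?_⟩
      (Set.singleton_subset_iff.2 hsB) ?_
    · exact (Set.univ_pi_singleton s).symm
    · intro i
      have h1 : r i ∩ {s} = {s} :=
        Set.inter_eq_right.2 (Set.singleton_subset_iff.2 (hs i))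
      unfold contractOp
      simp only [h1, Set.image_singleton, convexHull_singleton]
      exact Set.univ_pi_singleton s
  exact Set.singleton_ne_empty s h
end

section
/- Let an interval constraint system on ℝⁿ be given, let B = Set.pi Set.univ I be a box, and let s be a solution of the system with s ∈ B. Then for every coordinate i and every convex set J ⊆ ℝ with s i ∈ J, the system is non-failed below the box Set.pi Set.univ (Function.update I i J). In particular, every convex set containing the i-th component of a solution in B is an i-th pseudo-solution of the system. -/
/-- Every convex set containing the `i`-th component of a solution in the box
is an `i`-th pseudo-solution: the system is non-failed below the box obtained
by replacing the `i`-th factor by that convex set. -/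
theorem stmt_16 {n m : ℕ} (r : Fin m → Set (Fin n → ℝ))
    (I : Fin n → Set ℝ) (hI : ∀ j, Convex ℝ (I j))
    (s : Fin n → ℝ) (hsol : ∀ k, s ∈ r k)
    (hsB : s ∈ Set.pi Set.univ I)
    (i : Fin n) (J : Set ℝ) (hJ : Convex ℝ J) (hsi : s i ∈ J) :
    ¬ Failed r (Set.pi Set.univ (Function.update I i J)) := by
  intro h
  have hs : ({s} : Set (Fin n → ℝ)) = Set.pi Set.univ (fun j => ({s j} : Set ℝ)) :=
    (Set.univ_pi_singleton s).symm
  have key := h {s} ⟨fun j => {s j}, fun j => convex_singleton _, hs⟩ ?_ ?_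
  · exact Set.singleton_ne_empty s key
  · rw [Set.singleton_subset_iff]
    intro j _
    by_cases hj : j = i
    · subst hj
      simpa using hsi
    · simpa [Function.update_of_ne hj] using hsB j (Set.mem_univ j)
  · intro k
    have h1 : r k ∩ {s} = {s} := Set.inter_eq_right.mpr (Set.singleton_subset_iff.mpr (hsol k))
    unfold contractOp
    rw [h1]
    simp only [Set.image_singleton, convexHull_singleton]
    exact hs.symm
end
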